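/- For any bijection f from the edge set of K_n to {1, ..., n(n-1)/2}, there exists a simple path (no repeated vertices) in K_n of length at least sqrt(n-1) whose edge labels under f are strictly increasing. -/

import Mathlib

/-!
The pedestrian argument. Put one pedestrian on every vertex and call the edges in increasing order
of their labels; when an edge is called, the pedestrians at its two ends exchange places, unless one
of them would revisit a vertex. All routes are increasing paths. A called edge is either traversed
by two pedestrians or becomes a chord of the route of one of them, so if edges on a route count once
and its chords count twice, every edge of the graph is counted at least twice. A path of length `k`
has `k` edges and at most `(k + 1).choose 2 - k` chords, a total count of at most `k ^ 2`. Hence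
twice the number of edges is at most the sum of the squared lengths of the routes, and some route
has squared length at least the average degree.
-/

open Finset SimpleGraph

section

variable {V α : Type*} {G : SimpleGraph V} {u v w : V}

section chordWeight

open Classical in
/-- The contribution of the edge `e` to the count for the walk `p`: edges of `p` have weight one and
chords of `p` have weight two, so that the weights for a path of length `k` in a complete graph add
up to `k ^ 2`. -/
noncomputable def chordWeight (p : G.Walk u v) (e : Sym2 V) : ℕ :=
  if e ∈ p.edges then 1 else if p.IsChord e then 2 else 0

theorem chordWeight_of_mem_edges {p : G.Walk u v} {e : Sym2 V} (he : e ∈ p.edges) :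
    chordWeight p e = 1 :=
  if_pos he

theorem chordWeight_of_isChord {p : G.Walk u v} {e : Sym2 V} (he : p.IsChord e) :
    chordWeight p e = 2 := by
  rw [chordWeight, if_neg he.2.1, if_pos he]

theorem isChord_cons_of_isChord {h : G.Adj u v} {p : G.Walk v w} {e : Sym2 V}
    (hp : p.IsChord e) (he : e ≠ s(u, v)) : (p.cons h).IsChord e := by
  induction e with | _ x y =>
  obtain ⟨hadj, hedge, hx, hy⟩ := Walk.isChord_sym2Mk.1 hp
  refine Walk.isChord_sym2Mk.2 ⟨hadj, ?_, .tail _ hx, .tail _ hy⟩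
  simpa only [Walk.edges_cons, List.mem_cons, not_or] using ⟨he, hedge⟩

theorem chordWeight_le_chordWeight_cons (h : G.Adj u v) (p : G.Walk v w) {e : Sym2 V}
    (he : e ≠ s(u, v)) : chordWeight p e ≤ chordWeight (p.cons h) e := by
  by_cases hedge : e ∈ p.edges
  · rw [chordWeight_of_mem_edges hedge, chordWeight_of_mem_edges (.tail _ hedge)]
  by_cases hchord : p.IsChord e
  · rw [chordWeight_of_isChord hchord, chordWeight_of_isChord (isChord_cons_of_isChord hchord he)]
  · simp only [chordWeight, if_neg hedge, if_neg hchord, zero_le]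

open Classical in
theorem length_add_card_chords_le [Fintype G.edgeSet] {p : G.Walk u v} (hp : p.IsPath) :
    p.length + #{e ∈ G.edgeFinset | p.IsChord e} ≤ (p.length + 1).choose 2 := by
  have hedges : #p.edges.toFinset = p.length := by
    rw [List.toFinset_card_of_nodup hp.isTrail.edges_nodup, Walk.length_edges]
  have hsupport : #p.support.toFinset = p.length + 1 := by
    rw [List.toFinset_card_of_nodup hp.support_nodup, Walk.length_support]
  have hdisj : Disjoint p.edges.toFinset {e ∈ G.edgeFinset | p.IsChord e} :=
    Finset.disjoint_left.2 fun e he hchord =>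
      (mem_filter.1 hchord).2.2.1 (List.mem_toFinset.1 he)
  rw [← hsupport, ← Sym2.card_image_offDiag, ← hedges, ← card_union_of_disjoint hdisj]
  refine card_le_card fun e he => ?_
  induction e with | _ x y =>
  suffices x ∈ p.support ∧ y ∈ p.support ∧ x ≠ y from
    mem_image.2 ⟨(x, y), by simpa using this, rfl⟩
  rcases mem_union.1 he with he | he
  · rw [List.mem_toFinset] at he
    exact ⟨p.fst_mem_support_of_mem_edges he, p.snd_mem_support_of_mem_edges he,
      (p.adj_of_mem_edges he).ne⟩
  · obtain ⟨hadj, -, hx, hy⟩ := Walk.isChord_sym2Mk.1 (mem_filter.1 he).2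
    exact ⟨hx, hy, hadj.ne⟩

theorem sum_chordWeight_le [Fintype G.edgeSet] {p : G.Walk u v} (hp : p.IsPath) :
    ∑ e ∈ G.edgeFinset, chordWeight p e ≤ p.length ^ 2 := by
  classical
  have hedges : #{e ∈ G.edgeFinset | e ∈ p.edges} ≤ p.length := by
    rw [← p.length_edges]
    exact (card_le_card fun e he => List.mem_toFinset.2 (mem_filter.1 he).2).trans
      p.edges.toFinset_card_le
  have hchoose : 2 * (p.length + 1).choose 2 = p.length ^ 2 + p.length := by
    rw [Nat.choose_two_right, Nat.mul_div_cancel' (Nat.even_mul_pred_self _).two_dvd,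
      Nat.add_sub_cancel]
    ring
  have hsum : ∑ e ∈ G.edgeFinset, chordWeight p e =
      #{e ∈ G.edgeFinset | e ∈ p.edges} + 2 * #{e ∈ G.edgeFinset | p.IsChord e} := by
    simp only [card_filter, mul_sum, ← sum_add_distrib]
    refine sum_congr rfl fun e _ => ?_
    by_cases hchord : p.IsChord e
    · simp [chordWeight, hchord, hchord.2.1]
    · simp [chordWeight, hchord]
  have hcount := length_add_card_chords_le hp
  omega

end chordWeight

variable {f : Sym2 V → α}

section PartialOrder

variable [PartialOrder α]

theorem isChain_map_edges_cons (hf : Set.InjOn f (G.incidenceSet v)) (h : G.Adj u v)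
    {p : G.Walk v w} (hp : (p.edges.map f).IsChain (· > ·)) (hu : u ∉ p.support)
    (hle : ∀ e ∈ p.edges, f e ≤ f s(u, v)) : ((p.cons h).edges.map f).IsChain (· > ·) := by
  cases p with
  | nil => exact .singleton _
  | @cons _ x _ h' p =>
    have hne : f s(v, x) ≠ f s(u, v) := fun heq => by
      have hedge : s(v, x) = s(u, v) :=
        hf (G.mk'_mem_incidenceSet_left_iff.2 h') (G.mk'_mem_incidenceSet_right_iff.2 h) heq
      have hmem : s(u, v) ∈ (p.cons h').edges := hedge ▸ .head _
      exact hu (Walk.fst_mem_support_of_mem_edges _ hmem)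
    exact .cons_cons ((hle _ List.mem_cons_self).lt_of_ne hne) hp

/-- A path in `G` with first vertex `v` along which the labels `f` strictly decrease: the reversed
route of the pedestrian who currently stands at `v`. -/
structure DescendingPath (G : SimpleGraph V) (f : Sym2 V → α) (v : V) where
  target : V
  walk : G.Walk v target
  isPath : walk.IsPath
  isChain : (walk.edges.map f).IsChain (· > ·)

namespace DescendingPath

/-- The route of a pedestrian who has not moved yet. -/
def nil (v : V) : DescendingPath G f v := ⟨v, .nil, .nil, .nil⟩

/-- The route, now ending at `u`, of the pedestrian at `v` after a move along the edge `s(u, v)`. -/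
def cons (hf : Set.InjOn f (G.incidenceSet v)) (h : G.Adj u v) (p : DescendingPath G f v)
    (hu : u ∉ p.walk.support) (hle : ∀ e ∈ p.walk.edges, f e ≤ f s(u, v)) :
    DescendingPath G f u :=
  ⟨p.target, p.walk.cons h, p.isPath.cons hu, isChain_map_edges_cons hf h p.isChain hu hle⟩

variable {T T' : ∀ v, DescendingPath G f v}

/-- The routes `T'` arise from the routes `T` when the pedestrians at `u` and `v` exchange places:
the one from `v` now stands at `u`, and vice versa. -/
structure IsExchange (T T' : ∀ v, DescendingPath G f v) (h : G.Adj u v) : Prop where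
  left : ∃ hpath hchain, T' u = ⟨_, (T v).walk.cons h, hpath, hchain⟩
  right : ∃ hpath hchain, T' v = ⟨_, (T u).walk.cons h.symm, hpath, hchain⟩
  of_ne : ∀ w, w ≠ u → w ≠ v → T' w = T w

namespace IsExchange

variable {h : G.Adj u v}

theorem symm (hT : IsExchange T T' h) : IsExchange T T' h.symm :=
  ⟨hT.right, hT.left, fun w hwv hwu => hT.of_ne w hwu hwv⟩

theorem edges_left (hT : IsExchange T T' h) :
    (T' u).walk.edges = s(u, v) :: (T v).walk.edges := by
  obtain ⟨_, _, hu⟩ := hT.left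
  rw [hu, Walk.edges_cons]

theorem chordWeight_left_eq_one (hT : IsExchange T T' h) : chordWeight (T' u).walk s(u, v) = 1 :=
  chordWeight_of_mem_edges (hT.edges_left ▸ .head _)

theorem chordWeight_le_left (hT : IsExchange T T' h) {e : Sym2 V} (he : e ≠ s(u, v)) :
    chordWeight (T v).walk e ≤ chordWeight (T' u).walk e := by
  obtain ⟨_, _, hu⟩ := hT.left
  rw [hu]
  exact chordWeight_le_chordWeight_cons h _ he

variable [Fintype V]

theorem two_le_sum_chordWeight (hT : IsExchange T T' h) :
    2 ≤ ∑ w, chordWeight (T' w).walk s(u, v) := by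
  classical
  have hv : chordWeight (T' v).walk s(u, v) = 1 :=
    Sym2.eq_swap (a := u) ▸ hT.symm.chordWeight_left_eq_one
  calc 2 = ∑ w ∈ {u, v}, chordWeight (T' w).walk s(u, v) := by
        rw [sum_pair h.ne, hT.chordWeight_left_eq_one, hv]
    _ ≤ ∑ w, chordWeight (T' w).walk s(u, v) := sum_le_sum_of_subset (subset_univ _)

theorem sum_chordWeight_le (hT : IsExchange T T' h) {e : Sym2 V} (he : e ≠ s(u, v)) :
    ∑ w, chordWeight (T w).walk e ≤ ∑ w, chordWeight (T' w).walk e := by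
  classical
  rw [← Equiv.sum_comp (Equiv.swap u v)]
  refine sum_le_sum fun w _ => ?_
  rcases eq_or_ne w u with rfl | hwu
  · rw [Equiv.swap_apply_left]
    exact hT.chordWeight_le_left he
  rcases eq_or_ne w v with rfl | hwv
  · rw [Equiv.swap_apply_right]
    exact hT.symm.chordWeight_le_left (Sym2.eq_swap (a := u) ▸ he)
  · rw [Equiv.swap_apply_of_ne_of_ne hwu hwv, hT.of_ne w hwu hwv]

end IsExchange

variable [Fintype V] {s : Finset (Sym2 V)}

/-- The invariant of the pedestrian argument: the routes `T v` use only edges from the set `s` of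
edges called so far, and count every edge of `s` at least twice. -/
structure Covers (T : ∀ v, DescendingPath G f v) (s : Finset (Sym2 V)) : Prop where
  mem_of_mem_edges : ∀ v, ∀ e ∈ (T v).walk.edges, e ∈ s
  two_le_sum : ∀ e ∈ s, 2 ≤ ∑ v, chordWeight (T v).walk e

theorem Covers.empty : Covers (nil : ∀ v, DescendingPath G f v) ∅ where
  mem_of_mem_edges _ _ he := absurd he List.not_mem_nil
  two_le_sum _ he := absurd he (notMem_empty _)

variable [DecidableEq V]

theorem Covers.insert_of_mem_support (hT : Covers T s) (h : G.Adj u v) (hs : s(u, v) ∉ s)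
    (hu : u ∈ (T v).walk.support) : Covers T (insert s(u, v) s) where
  mem_of_mem_edges w e he := mem_insert_of_mem (hT.mem_of_mem_edges w e he)
  two_le_sum := by
    refine (forall_mem_insert _ _ _).2 ⟨?_, hT.two_le_sum⟩
    have hchord : (T v).walk.IsChord s(u, v) := Walk.isChord_sym2Mk.2
      ⟨h, fun he => hs (hT.mem_of_mem_edges v _ he), hu, (T v).walk.start_mem_support⟩
    rw [← chordWeight_of_isChord hchord]
    exact single_le_sum (f := fun w => chordWeight (T w).walk s(u, v)) (fun _ _ => zero_le)
      (mem_univ v)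

theorem Covers.exchange {h : G.Adj u v} (hT : Covers T s) (hT' : IsExchange T T' h)
    (hs : s(u, v) ∉ s) : Covers T' (insert s(u, v) s) where
  mem_of_mem_edges w := by
    rcases eq_or_ne w u with rfl | hwu
    · rw [hT'.edges_left]
      exact List.forall_mem_cons.2 ⟨mem_insert_self _ _,
        fun e he => mem_insert_of_mem (hT.mem_of_mem_edges v e he)⟩
    rcases eq_or_ne w v with rfl | hwv
    · rw [hT'.symm.edges_left, Sym2.eq_swap]
      exact List.forall_mem_cons.2 ⟨mem_insert_self _ _,
        fun e he => mem_insert_of_mem (hT.mem_of_mem_edges u e he)⟩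
    · rw [hT'.of_ne w hwu hwv]
      exact fun e he => mem_insert_of_mem (hT.mem_of_mem_edges w e he)
  two_le_sum := (forall_mem_insert _ _ _).2 ⟨hT'.two_le_sum_chordWeight, fun e he =>
    (hT.two_le_sum e he).trans (hT'.sum_chordWeight_le (ne_of_mem_of_not_mem he hs))⟩

theorem Covers.exists_insert (hT : Covers T s) (hf : ∀ v, Set.InjOn f (G.incidenceSet v))
    (h : G.Adj u v) (hs : s(u, v) ∉ s) (hle : ∀ e ∈ s, f e ≤ f s(u, v)) :
    ∃ T' : ∀ v, DescendingPath G f v, Covers T' (insert s(u, v) s) := by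
  by_cases hu : u ∈ (T v).walk.support
  · exact ⟨T, hT.insert_of_mem_support h hs hu⟩
  by_cases hv : v ∈ (T u).walk.support
  · rw [Sym2.eq_swap] at hs ⊢
    exact ⟨T, hT.insert_of_mem_support h.symm hs hv⟩
  have hlabel (w : V) : ∀ e ∈ (T w).walk.edges, f e ≤ f s(u, v) := fun e he =>
    hle e (hT.mem_of_mem_edges w e he)
  let pu := (T v).cons (hf v) h hu (hlabel v)
  let pv := (T u).cons (hf u) h.symm hv (Sym2.eq_swap (a := u) ▸ hlabel u)
  let T' := Function.update (Function.update T u pu) v pv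
  have hT'u : T' u = pu := (Function.update_of_ne h.ne _ _).trans (Function.update_self ..)
  have hT'v : T' v = pv := Function.update_self ..
  have hne (w : V) (hwu : w ≠ u) (hwv : w ≠ v) : T' w = T w :=
    (Function.update_of_ne hwv _ _).trans (Function.update_of_ne hwu _ _)
  exact ⟨T', hT.exchange (h := h) ⟨⟨_, _, hT'u⟩, ⟨_, _, hT'v⟩, hne⟩ hs⟩

end DescendingPath

end PartialOrder

variable [LinearOrder α] [Fintype V]

theorem DescendingPath.exists_covers {s : Finset (Sym2 V)}
    (hf : ∀ v, Set.InjOn f (G.incidenceSet v)) (hs : ↑s ⊆ G.edgeSet) :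
    ∃ T : ∀ v, DescendingPath G f v, Covers T s := by
  classical
  induction s using induction_on_max_value f with
  | empty => exact ⟨nil, Covers.empty⟩
  | insert e s he hle ih =>
    rw [coe_insert, Set.insert_subset_iff] at hs
    obtain ⟨T, hT⟩ := ih hs.2
    induction e with | _ u v => exact hT.exists_insert hf hs.1 he hle

variable [Nonempty V]

theorem exists_isPath_isChain_two_mul_card_edgeFinset_le [Fintype G.edgeSet]
    (hf : ∀ v, Set.InjOn f (G.incidenceSet v)) :
    ∃ (u v : V) (p : G.Walk u v), p.IsPath ∧ (p.edges.map f).IsChain (· < ·) ∧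
      2 * #G.edgeFinset ≤ Fintype.card V * p.length ^ 2 := by
  classical
  obtain ⟨T, hT⟩ := DescendingPath.exists_covers hf G.coe_edgeFinset.subset
  obtain ⟨v, hv⟩ := Finite.exists_max fun v => (T v).walk.length
  refine ⟨_, _, (T v).walk.reverse, (T v).isPath.reverse, ?_, ?_⟩
  · rw [Walk.edges_reverse, List.map_reverse, List.isChain_reverse]
    exact (T v).isChain
  calc 2 * #G.edgeFinset = ∑ _e ∈ G.edgeFinset, 2 := by rw [sum_const, smul_eq_mul, mul_comm]
    _ ≤ ∑ e ∈ G.edgeFinset, ∑ w, chordWeight (T w).walk e := sum_le_sum hT.two_le_sum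
    _ = ∑ w, ∑ e ∈ G.edgeFinset, chordWeight (T w).walk e := sum_comm
    _ ≤ ∑ _w : V, (T v).walk.length ^ 2 := sum_le_sum fun w _ =>
      (sum_chordWeight_le (T w).isPath).trans (Nat.pow_le_pow_left (hv w) 2)
    _ = Fintype.card V * (T v).walk.reverse.length ^ 2 := by
      rw [sum_const, card_univ, smul_eq_mul, Walk.length_reverse]

theorem increasing_path_of_length_sqrt_general [Fintype G.edgeSet]
    (hf : ∀ v, Set.InjOn f (G.incidenceSet v)) :
    ∃ (k : ℕ) (w : ℕ → V), √(2 * #G.edgeFinset / Fintype.card V : ℝ) ≤ k ∧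
      (∀ i ≤ k, ∀ j ≤ k, w i = w j → i = j) ∧
      (∀ i, i + 1 < k → f s(w i, w (i + 1)) < f s(w (i + 1), w (i + 2))) ∧
      ∀ i < k, G.Adj (w i) (w (i + 1)) := by
  obtain ⟨u, v, p, hpath, hchain, hle⟩ := exists_isPath_isChain_two_mul_card_edgeFinset_le hf
  refine ⟨p.length, p.getVert, Real.sqrt_le_iff.2 ⟨Nat.cast_nonneg _, ?_⟩,
    fun i hi j hj hij => hpath.getVert_injOn hi hj hij, fun i hi => ?_,
    fun i hi => p.adj_getVert_succ hi⟩
  · rw [div_le_iff₀' (by exact_mod_cast Fintype.card_pos)]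
    exact_mod_cast hle
  · have hlt := hchain.getElem i (by rwa [List.length_map, Walk.length_edges])
    rwa [List.getElem_map, List.getElem_map, Walk.getElem_edges, Walk.getElem_edges] at hlt

theorem two_mul_card_edgeFinset_top_div_card [DecidableEq V] :
    (2 * #(⊤ : SimpleGraph V).edgeFinset / Fintype.card V : ℝ) = Fintype.card V - 1 := by
  have hcard : (Fintype.card V : ℝ) ≠ 0 := Nat.cast_ne_zero.2 Fintype.card_ne_zero
  rw [card_edgeFinset_top_eq_card_choose_two, Nat.cast_choose_two]
  field_simp

end

/-- For any bijection `f` from the edge set of `K_n` to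
`{1, ..., n(n-1)/2}`, there is a simple path (no repeated vertices) of length
at least `√(n-1)` whose edge labels are strictly increasing. -/
theorem increasing_path_of_length_sqrt
    (n : ℕ) (hn : 2 ≤ n) (f : Sym2 (Fin n) → ℕ)
    (hf : Set.BijOn f {e : Sym2 (Fin n) | ¬ e.IsDiag} (Set.Icc 1 (n * (n - 1) / 2))) :
    ∃ (k : ℕ) (w : ℕ → Fin n), Real.sqrt ((n : ℝ) - 1) ≤ (k : ℝ) ∧
      (∀ i ≤ k, ∀ j ≤ k, w i = w j → i = j) ∧
      (∀ i, i + 1 < k → f s(w i, w (i + 1)) < f s(w (i + 1), w (i + 2))) := by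
  have : Nonempty (Fin n) := ⟨⟨0, by omega⟩⟩
  obtain ⟨k, w, hk, hinj, hlt, -⟩ := increasing_path_of_length_sqrt_general (G := ⊤)
    fun v => hf.injOn.mono ((incidenceSet_subset _ v).trans (edgeSet_top (V := Fin n)).subset)
  rw [two_mul_card_edgeFinset_top_div_card, Fintype.card_fin] at hk
  exact ⟨k, w, hk, hinj, hlt⟩
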